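/- arXiv:1203.4450 — 2 statements merged into one kernel-verified Lean document; each statement's English description precedes it below -/
import Mathlib

section
/- Let R be a commutative ring, let I = (x_1,…,x_s) be a finitely generated ideal and let p ≥ 2 be an integer. For 1 ≤ i ≤ s let I_i denote the ideal generated by the x_j with j ≠ i. Then for each 1 ≤ i ≤ s there exists a surjective R-module morphism ker(α_{I,p}) ↠ (I_i I^{p-1} : x_i^p)/(I_i : x_i). In particular, if α_{I,p} is an isomorphism, then (I_i I^{n-1} : x_i^n)/(I_i I^{n-2} : x_i^{n-1}) = 0 for each 1 ≤ i ≤ s and each 2 ≤ n ≤ p. -/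
open scoped TensorProduct
open PiTensorProduct

section SymDefs

variable (R : Type*) [CommRing R]

/-- The `n`-fold tensor power of (the `R`-module underlying) the ideal `I`. -/
abbrev TensPow (I : Ideal R) (n : ℕ) : Type _ := ⨂[R] (_ : Fin n), ↥I

/-- The multilinear "product" map `(v₁,…,vₙ) ↦ v₁⋯vₙ : Iⁿ ⊆ R`. -/
noncomputable def prodML (I : Ideal R) (n : ℕ) :
    MultilinearMap R (fun _ : Fin n => ↥I) R :=
  (MultilinearMap.mkPiAlgebra R (Fin n) R).compLinearMap fun _ => I.subtype

/-- The symmetrizer relations in the `n`-th tensor power of `I`. -/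
noncomputable def symRel (I : Ideal R) (n : ℕ) : Submodule R (TensPow R I n) :=
  Submodule.span R {z | ∃ (v : Fin n → ↥I) (σ : Equiv.Perm (Fin n)),
    z = tprod R v - tprod R (v ∘ σ)}

/-- The `n`-th symmetric power `Symⁿ(I)` of the ideal `I`, i.e. the `n`-th graded
component of the symmetric algebra of the `R`-module `I`. -/
abbrev SymPow (I : Ideal R) (n : ℕ) : Type _ := TensPow R I n ⧸ symRel R I n

/-- The `n`-th component `α_{I,n} : Symₙ(I) → Iⁿ ⊆ R` of the canonical morphism
`α_I : Sym(I) → R(I)` (composed with the inclusion `Iⁿ ⊆ R`; it is an isomorphism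
onto `Iⁿ` iff it is injective as a map to `R`). -/
noncomputable def alphaCan (I : Ideal R) (n : ℕ) : SymPow R I n →ₗ[R] R :=
  Submodule.liftQ (symRel R I n) (PiTensorProduct.lift (prodML R I n)) (by
    rw [symRel, Submodule.span_le]
    rintro z ⟨v, σ, rfl⟩
    simp only [SetLike.mem_coe, LinearMap.mem_ker, map_sub, PiTensorProduct.lift.tprod]
    have : prodML R I n (v ∘ σ) = prodML R I n v := by
      simp only [prodML, MultilinearMap.compLinearMap_apply,
        MultilinearMap.mkPiAlgebra_apply, Function.comp_apply]
      exact Equiv.prod_comp σ fun i => ((v i : R))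
    rw [this, sub_self])

end SymDefs

/-!
Write `J = I_i` and `a = x_i`, so that `I = J + (a)`. Sending `j + r a` to `r` is a well-defined map
`I → R/(J : a)`, and multiplying its values gives `Ψ : Sym_p(I) → R/(J : a)`. Together with
`α_{I,p}` it fits into a commutative diagram with exact rows

  `0 → ker Ψ → Sym_p(I) → R/(J : a)   → 0`
  `0 → J Iᵖ⁻¹ →   R     → R/(J Iᵖ⁻¹) → 0`

whose right vertical map is multiplication by `aᵖ`, with kernel `(J Iᵖ⁻¹ : aᵖ)/(J : a)`. The left
vertical map is surjective because `J Iᵖ⁻¹` is spanned by the products `j v₂ ⋯ v_p`, so by the snake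
lemma `Ψ` maps `ker α_{I,p}` onto the kernel on the right. The second assertion follows because
`n ↦ (J Iⁿ⁻¹ : aⁿ)` is increasing with first term `(J : a)`.
-/

section LinearAlgebra

variable {R : Type*} [Ring R]
variable {M N P Q : Type*} [AddCommGroup M] [AddCommGroup N] [AddCommGroup P] [AddCommGroup Q]
variable [Module R M] [Module R N] [Module R P] [Module R Q]

theorem map_ker_eq_ker_of_comp_eq {f : M →ₗ[R] N} {g : M →ₗ[R] P} {π : N →ₗ[R] Q} {μ : P →ₗ[R] Q}
    (hcomm : π ∘ₗ f = μ ∘ₗ g) (hg : Function.Surjective g)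
    (hπ : LinearMap.ker π ≤ (LinearMap.ker g).map f) :
    (LinearMap.ker f).map g = LinearMap.ker μ := by
  have hcomm' (m : M) : π (f m) = μ (g m) := LinearMap.congr_fun hcomm m
  apply le_antisymm
  · rintro _ ⟨m, hm, rfl⟩
    rw [LinearMap.mem_ker, ← hcomm', LinearMap.mem_ker.1 hm, map_zero]
  · intro y hy
    obtain ⟨m, rfl⟩ := hg y
    obtain ⟨m', hm', hfm'⟩ := hπ ((hcomm' m).trans hy)
    refine ⟨m - m', ?_, ?_⟩
    · rw [SetLike.mem_coe, LinearMap.mem_ker, map_sub, hfm', sub_self]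
    · rw [map_sub, LinearMap.mem_ker.1 hm', sub_zero]

theorem exists_surjective_quotient_comap_subtype {C D : Submodule R M} {g : N →ₗ[R] M ⧸ D}
    (hg : LinearMap.range g = C.map D.mkQ) :
    ∃ f : N →ₗ[R] C ⧸ D.comap C.subtype, Function.Surjective f := by
  have hker : LinearMap.ker (D.mkQ ∘ₗ C.subtype) = D.comap C.subtype := by
    rw [LinearMap.ker_comp, Submodule.ker_mkQ]
  have hrange : LinearMap.range g = LinearMap.range (D.mkQ ∘ₗ C.subtype) := by
    rw [hg, LinearMap.range_comp, Submodule.range_subtype]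
  let e : LinearMap.range g ≃ₗ[R] C ⧸ D.comap C.subtype :=
    LinearEquiv.ofEq _ _ hrange ≪≫ₗ (D.mkQ ∘ₗ C.subtype).quotKerEquivRange.symm ≪≫ₗ
      Submodule.quotEquivOfEq _ _ hker
  exact ⟨e.toLinearMap ∘ₗ g.rangeRestrict, e.surjective.comp g.surjective_rangeRestrict⟩

end LinearAlgebra

section IdealPowers

variable {R : Type*} [CommRing R] {I J : Ideal R}

theorem prod_sub_prod_mem_mul_pow {n : ℕ} {v w : Fin (n + 1) → R} (hv : ∀ k, v k ∈ I)
    (hw : ∀ k, w k ∈ I) (hvw : ∀ k, v k - w k ∈ J) : ∏ k, v k - ∏ k, w k ∈ J * I ^ n := by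
  induction n with
  | zero => simpa using hvw 0
  | succ n ih =>
    have hhead : (v 0 - w 0) * ∏ k : Fin (n + 1), v k.succ ∈ J * I ^ (n + 1) := by
      refine Ideal.mul_mem_mul (hvw 0) ?_
      simpa using Ideal.prod_mem_prod (s := Finset.univ) fun k _ ↦ hv (Fin.succ k)
    have htail : w 0 * (∏ k : Fin (n + 1), v k.succ - ∏ k : Fin (n + 1), w k.succ)
        ∈ J * I ^ (n + 1) := by
      rw [pow_succ', mul_left_comm]
      exact Ideal.mul_mem_mul (hw 0) (ih (fun k ↦ hv _) (fun k ↦ hw _) fun k ↦ hvw _)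
    rw [Fin.prod_univ_succ, Fin.prod_univ_succ w]
    convert add_mem hhead htail using 1
    ring

theorem mul_pow_eq_span (I J : Ideal R) (n : ℕ) :
    J * I ^ n = Ideal.span {y | ∃ j ∈ J, ∃ v : Fin n → I, j * ∏ k, (v k : R) = y} := by
  rw [Submodule.pow_eq_span_pow_set, ← Submodule.span_eq J, Submodule.span_mul_span]
  congr 1
  ext y
  simp [Set.mem_mul, Set.mem_pow, List.prod_ofFn]

theorem colon_mul_pow_mono {a : R} (ha : a ∈ I) (J : Ideal R) :
    Monotone fun n ↦ (J * I ^ n).colon (Ideal.span {a ^ (n + 1)}) := by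
  refine monotone_nat_of_le_succ fun n r hr ↦ ?_
  rw [Ideal.mem_colon_span_singleton] at hr ⊢
  rw [pow_succ a, pow_succ I, ← mul_assoc, ← mul_assoc]
  exact Ideal.mul_mem_mul hr ha

theorem colon_le_colon_mul_pow {a : R} (ha : a ∈ I) (J : Ideal R) (n : ℕ) :
    J.colon (Ideal.span {a}) ≤ (J * I ^ n).colon (Ideal.span {a ^ (n + 1)}) := by
  simpa using colon_mul_pow_mono ha J n.zero_le

theorem span_image_ne_sup_span_singleton {ι : Type*} (x : ι → R) (i : ι) :
    Ideal.span (x '' {j | j ≠ i}) ⊔ Ideal.span {x i} = Ideal.span (Set.range x) := by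
  rw [← Ideal.span_union, ← Set.image_singleton, ← Set.image_union, ← Set.image_univ]
  congr 2
  ext j
  simp [em]

end IdealPowers

namespace SymPow

variable {R : Type*} [CommRing R] {I : Ideal R} {n : ℕ}

/-- The universal symmetric multilinear map `(v₁, …, vₙ) ↦ v₁ ⋯ vₙ ∈ Symₙ(I)`. -/
noncomputable def mk (I : Ideal R) (n : ℕ) :
    MultilinearMap R (fun _ : Fin n ↦ I) (SymPow R I n) :=
  (symRel R I n).mkQ.compMultilinearMap (tprod R)

theorem hom_ext {M : Type*} [AddCommGroup M] [Module R M] {f g : SymPow R I n →ₗ[R] M}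
    (h : ∀ v, f (mk I n v) = g (mk I n v)) : f = g :=
  Submodule.linearMap_qext _ <| PiTensorProduct.ext <| MultilinearMap.ext h

variable {A : Type*} [CommRing A] [Algebra R A]

/-- The degree-`n` component `v₁ ⋯ vₙ ↦ φ v₁ ⋯ φ vₙ` of the algebra morphism `Sym(I) → A` induced by
a linear map `φ : I → A`. -/
noncomputable def liftProd (φ : I →ₗ[R] A) (n : ℕ) : SymPow R I n →ₗ[R] A :=
  (symRel R I n).liftQ
    (PiTensorProduct.lift ((MultilinearMap.mkPiAlgebra R (Fin n) A).compLinearMap fun _ ↦ φ)) <| by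
    rw [symRel, Submodule.span_le]
    rintro _ ⟨v, σ, rfl⟩
    simpa [sub_eq_zero] using (Equiv.prod_comp σ fun k ↦ φ (v k)).symm

theorem liftProd_mk (φ : I →ₗ[R] A) (v : Fin n → I) : liftProd φ n (mk I n v) = ∏ k, φ (v k) := by
  simp [liftProd, mk]

theorem alphaCan_mk (v : Fin n → I) : alphaCan R I n (mk I n v) = ∏ k, (v k : R) :=
  liftProd_mk I.subtype v

theorem mul_pow_le_map_ker_liftProd {J : Ideal R} (hJI : J ≤ I) {φ : I →ₗ[R] A}
    (hφ : ∀ v : I, (v : R) ∈ J → φ v = 0) (n : ℕ) :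
    J * I ^ n ≤ (LinearMap.ker (liftProd φ (n + 1))).map (alphaCan R I (n + 1)) := by
  rw [mul_pow_eq_span, Ideal.span, Submodule.span_le]
  rintro _ ⟨j, hj, v, rfl⟩
  refine ⟨mk I (n + 1) (Fin.cons ⟨j, hJI hj⟩ v), ?_, ?_⟩
  · simp [liftProd_mk, Fin.prod_univ_succ, hφ ⟨j, hJI hj⟩ hj]
  · simp [alphaCan_mk, Fin.prod_univ_succ]

end SymPow

section SupSpanSingleton

variable {R : Type*} [CommRing R] {I J : Ideal R} {a : R}

theorem mem_of_sup_span_singleton_eq (hI : J ⊔ Ideal.span {a} = I) : a ∈ I :=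
  hI ▸ Ideal.mem_sup_right (Ideal.mem_span_singleton_self a)

/-- The map `J × R → I`, `(j, r) ↦ j + r a`, for `I = J + (a)`. It presents `I` by generators, so
that maps out of `I` can be defined on pairs `(j, r)`. -/
noncomputable def addMulMap (hI : J ⊔ Ideal.span {a} = I) : J × R →ₗ[R] I :=
  (Submodule.inclusion (le_sup_left.trans hI.le)).coprod
    (LinearMap.toSpanSingleton R I ⟨a, mem_of_sup_span_singleton_eq hI⟩)

theorem coe_addMulMap (hI : J ⊔ Ideal.span {a} = I) (y : J × R) :
    (addMulMap hI y : R) = y.1 + y.2 * a := by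
  simp [addMulMap]

theorem addMulMap_surjective (hI : J ⊔ Ideal.span {a} = I) :
    Function.Surjective (addMulMap hI) := by
  rintro ⟨v, hv⟩
  obtain ⟨j, hj, w, hw, rfl⟩ := Submodule.mem_sup.1 (hI.ge hv)
  obtain ⟨r, rfl⟩ := Ideal.mem_span_singleton'.1 hw
  exact ⟨(⟨j, hj⟩, r), Subtype.ext (coe_addMulMap hI _)⟩

theorem ker_addMulMap_le (hI : J ⊔ Ideal.span {a} = I) :
    LinearMap.ker (addMulMap hI) ≤
      LinearMap.ker ((J.colon (Ideal.span {a})).mkQ ∘ₗ LinearMap.snd R J R) := by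
  intro y hy
  have hzero : (y.1 : R) + y.2 * a = 0 := by
    rw [← coe_addMulMap hI, LinearMap.mem_ker.1 hy, ZeroMemClass.coe_zero]
  rw [LinearMap.ker_comp, Submodule.ker_mkQ, Submodule.mem_comap, LinearMap.snd_apply,
    Ideal.mem_colon_span_singleton, eq_neg_of_add_eq_zero_right hzero]
  exact neg_mem y.1.2

/-- For `I = J + (a)`, the map `I → R/(J : a)` sending `j + r a` to the class of `r`. -/
noncomputable def coeffModColon (hI : J ⊔ Ideal.span {a} = I) :
    I →ₗ[R] R ⧸ J.colon (Ideal.span {a}) :=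
  (LinearMap.ker (addMulMap hI)).liftQ _ (ker_addMulMap_le hI) ∘ₗ
    ((addMulMap hI).quotKerEquivOfSurjective (addMulMap_surjective hI)).symm.toLinearMap

theorem coeffModColon_addMulMap (hI : J ⊔ Ideal.span {a} = I) (y : J × R) :
    coeffModColon hI (addMulMap hI y) = Ideal.Quotient.mk _ y.2 := by
  have hsymm : ((addMulMap hI).quotKerEquivOfSurjective (addMulMap_surjective hI)).symm
      (addMulMap hI y) = Submodule.Quotient.mk y :=
    (LinearEquiv.symm_apply_eq _).2 rfl
  rw [coeffModColon, LinearMap.comp_apply, LinearEquiv.coe_coe, hsymm]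
  rfl

theorem coeffModColon_of_mem (hI : J ⊔ Ideal.span {a} = I) (v : I) (hv : (v : R) ∈ J) :
    coeffModColon hI v = 0 := by
  have hv' : v = addMulMap hI (⟨v, hv⟩, 0) := Subtype.ext (by simp [coe_addMulMap])
  rw [hv', coeffModColon_addMulMap, map_zero]

theorem coeffModColon_self (hI : J ⊔ Ideal.span {a} = I) :
    coeffModColon hI ⟨a, mem_of_sup_span_singleton_eq hI⟩ = 1 := by
  have ha : ⟨a, mem_of_sup_span_singleton_eq hI⟩ = addMulMap hI (0, 1) :=
    Subtype.ext (by simp [coe_addMulMap])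
  rw [ha, coeffModColon_addMulMap, map_one]

theorem liftProd_coeffModColon_surjective (hI : J ⊔ Ideal.span {a} = I) (n : ℕ) :
    Function.Surjective (SymPow.liftProd (coeffModColon hI) n) := by
  intro y
  obtain ⟨r, rfl⟩ := Ideal.Quotient.mk_surjective y
  refine ⟨r • SymPow.mk I n fun _ ↦ ⟨a, mem_of_sup_span_singleton_eq hI⟩, ?_⟩
  rw [map_smul, SymPow.liftProd_mk]
  simp only [coeffModColon_self, Finset.prod_const_one, Algebra.smul_def, mul_one]
  rfl

theorem colon_le_comap_mulRight_pow (ha : a ∈ I) (J : Ideal R) (n : ℕ) :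
    J.colon (Ideal.span {a}) ≤
      Submodule.comap (LinearMap.mulRight R (a ^ (n + 1))) (J * I ^ n) :=
  fun _ hr ↦ Ideal.mem_colon_span_singleton.1 (colon_le_colon_mul_pow ha J n hr)

/-- Multiplication by `aⁿ⁺¹` as a map `R/(J : a) → R/(J Iⁿ)`, where `a ∈ I`. It is the right
vertical map of the diagram to which the snake lemma is applied. -/
noncomputable def mulPowMap (ha : a ∈ I) (J : Ideal R) (n : ℕ) :
    R ⧸ J.colon (Ideal.span {a}) →ₗ[R] R ⧸ J * I ^ n :=
  Submodule.mapQ _ _ (LinearMap.mulRight R (a ^ (n + 1))) (colon_le_comap_mulRight_pow ha J n)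

theorem ker_mulPowMap (ha : a ∈ I) (J : Ideal R) (n : ℕ) :
    LinearMap.ker (mulPowMap ha J n) =
      Submodule.map (J.colon (Ideal.span {a})).mkQ
        ((J * I ^ n).colon (Ideal.span {a ^ (n + 1)})) := by
  rw [mulPowMap, Submodule.ker_mapQ]
  congr 1
  ext r
  rw [Submodule.mem_comap, Ideal.mem_colon_span_singleton, LinearMap.mulRight_apply]

theorem mkQ_comp_alphaCan (hI : J ⊔ Ideal.span {a} = I) (n : ℕ) :
    (J * I ^ n).mkQ ∘ₗ alphaCan R I (n + 1) =
      mulPowMap (mem_of_sup_span_singleton_eq hI) J n ∘ₗ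
        SymPow.liftProd (coeffModColon hI) (n + 1) := by
  have ha := mem_of_sup_span_singleton_eq hI
  refine SymPow.hom_ext fun v ↦ ?_
  choose y hy using fun k ↦ addMulMap_surjective hI (v k)
  have hsub (k : Fin (n + 1)) : (v k : R) - (y k).2 * a ∈ J := by
    rw [← hy, coe_addMulMap, add_sub_cancel_right]
    exact (y k).1.2
  have hprod : ∏ k, (v k : R) - (∏ k, (y k).2) * a ^ (n + 1) ∈ J * I ^ n := by
    simpa [Finset.prod_mul_distrib] using
      prod_sub_prod_mem_mul_pow (fun k ↦ (v k).2) (fun k ↦ I.mul_mem_left (y k).2 ha) hsub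
  have hcoeff : ∏ k, coeffModColon hI (v k) = Ideal.Quotient.mk _ (∏ k, (y k).2) := by
    simp only [← hy, coeffModColon_addMulMap, map_prod]
  rw [LinearMap.comp_apply, LinearMap.comp_apply, SymPow.alphaCan_mk, SymPow.liftProd_mk, hcoeff]
  exact (Submodule.Quotient.eq _).2 hprod

theorem map_ker_alphaCan (hI : J ⊔ Ideal.span {a} = I) (n : ℕ) :
    (LinearMap.ker (alphaCan R I (n + 1))).map (SymPow.liftProd (coeffModColon hI) (n + 1)) =
      Submodule.map (J.colon (Ideal.span {a})).mkQ
        ((J * I ^ n).colon (Ideal.span {a ^ (n + 1)})) := by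
  rw [← ker_mulPowMap (mem_of_sup_span_singleton_eq hI)]
  refine map_ker_eq_ker_of_comp_eq (mkQ_comp_alphaCan hI n)
    (liftProd_coeffModColon_surjective hI (n + 1)) ?_
  rw [Submodule.ker_mkQ]
  exact SymPow.mul_pow_le_map_ker_liftProd (le_sup_left.trans hI.le) (coeffModColon_of_mem hI) n

theorem exists_surjective_ker_alphaCan (hI : J ⊔ Ideal.span {a} = I) (n : ℕ) :
    ∃ f : LinearMap.ker (alphaCan R I (n + 1)) →ₗ[R]
        (J * I ^ n).colon (Ideal.span {a ^ (n + 1)}) ⧸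
          Submodule.comap ((J * I ^ n).colon (Ideal.span {a ^ (n + 1)})).subtype
            (J.colon (Ideal.span {a})),
      Function.Surjective f := by
  refine exists_surjective_quotient_comap_subtype
    (g := SymPow.liftProd (coeffModColon hI) (n + 1) ∘ₗ Submodule.subtype _) ?_
  rw [LinearMap.range_comp, Submodule.range_subtype, map_ker_alphaCan]

theorem colon_mul_pow_eq_colon_of_injective (hI : J ⊔ Ideal.span {a} = I) {m n : ℕ} (hmn : m ≤ n)
    (hinj : Function.Injective (alphaCan R I (n + 1))) :
    (J * I ^ m).colon (Ideal.span {a ^ (m + 1)}) = J.colon (Ideal.span {a}) := by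
  have ha := mem_of_sup_span_singleton_eq hI
  have hlast : (J * I ^ n).colon (Ideal.span {a ^ (n + 1)}) ≤ J.colon (Ideal.span {a}) := by
    have hmap := map_ker_alphaCan hI n
    rwa [LinearMap.ker_eq_bot.2 hinj, Submodule.map_bot, eq_comm, ← LinearMap.le_ker_iff_map,
      Submodule.ker_mkQ] at hmap
  exact le_antisymm ((colon_mul_pow_mono ha J hmn).trans hlast) (colon_le_colon_mul_pow ha J m)

end SupSpanSingleton

theorem statement15_general {R ι : Type*} [CommRing R] (x : ι → R)
    (I : Ideal R) (hI : I = Ideal.span (Set.range x)) (p : ℕ) (hp : 1 ≤ p) :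
    (∀ i : ι,
      ∃ f : (LinearMap.ker (alphaCan R I p)) →ₗ[R]
          (((Ideal.span (x '' {j | j ≠ i}) * I ^ (p - 1)).colon (Ideal.span {x i ^ p})) ⧸
            Submodule.comap
              ((Ideal.span (x '' {j | j ≠ i}) * I ^ (p - 1)).colon (Ideal.span {x i ^ p})).subtype
              ((Ideal.span (x '' {j | j ≠ i})).colon (Ideal.span {x i}))),
        Function.Surjective f) ∧
    (Function.Injective (alphaCan R I p) →
      ∀ i : ι, ∀ n, 2 ≤ n → n ≤ p →
        (Ideal.span (x '' {j | j ≠ i}) * I ^ (n - 1)).colon (Ideal.span {x i ^ n})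
          ≤ (Ideal.span (x '' {j | j ≠ i}) * I ^ (n - 2)).colon (Ideal.span {x i ^ (n - 1)})) := by
  have hsup (i : ι) : Ideal.span (x '' {j | j ≠ i}) ⊔ Ideal.span {x i} = I :=
    (span_image_ne_sup_span_singleton x i).trans hI.symm
  obtain ⟨m, rfl⟩ := Nat.exists_eq_add_of_le' hp
  refine ⟨fun i ↦ exists_surjective_ker_alphaCan (hsup i) m, fun hinj i n hn hnm ↦ ?_⟩
  obtain ⟨k, rfl⟩ := Nat.exists_eq_add_of_le' hn
  have hcolon {l : ℕ} (hl : l ≤ m) := colon_mul_pow_eq_colon_of_injective (hsup i) hl hinj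
  exact ((hcolon (l := k + 1) (by omega)).trans (hcolon (l := k) (by omega)).symm).le

/-- For `I = (x₁,…,xₛ)` and `p ≥ 2`, for each `i` there is a surjective morphism
`ker(α_{I,p}) ↠ (I_i Iᵖ⁻¹ : xᵢᵖ)/(I_i : xᵢ)` where `I_i = (x_j : j ≠ i)`;
in particular, if `α_{I,p}` is an isomorphism then
`(I_i Iⁿ⁻¹ : xᵢⁿ)/(I_i Iⁿ⁻² : xᵢⁿ⁻¹) = 0` for `1 ≤ i ≤ s` and `2 ≤ n ≤ p`. -/
theorem statement15 {R : Type*} [CommRing R] {s : ℕ} (x : Fin s → R)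
    (I : Ideal R) (hI : I = Ideal.span (Set.range x)) (p : ℕ) (hp : 2 ≤ p) :
    (∀ i : Fin s,
      ∃ f : (LinearMap.ker (alphaCan R I p)) →ₗ[R]
          (((Ideal.span (x '' {j | j ≠ i}) * I ^ (p - 1)).colon (Ideal.span {x i ^ p})) ⧸
            Submodule.comap
              ((Ideal.span (x '' {j | j ≠ i}) * I ^ (p - 1)).colon (Ideal.span {x i ^ p})).subtype
              ((Ideal.span (x '' {j | j ≠ i})).colon (Ideal.span {x i}))),
        Function.Surjective f) ∧
    (Function.Injective (alphaCan R I p) →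
      ∀ i : Fin s, ∀ n, 2 ≤ n → n ≤ p →
        (Ideal.span (x '' {j | j ≠ i}) * I ^ (n - 1)).colon (Ideal.span {x i ^ n})
          ≤ (Ideal.span (x '' {j | j ≠ i}) * I ^ (n - 2)).colon (Ideal.span {x i ^ (n - 1)})) :=
  statement15_general x I hI p (by omega)
end

section
/- Let R be a commutative ring, let I = (x_1,…,x_s) with s ≥ 3, and let p ≥ 2 be an integer. For a subset of indices, I_{i_1,…,i_r} denotes the ideal generated by the x_j with j ∉ {i_1,…,i_r}. Suppose J = (x_1,…,x_{s-1}) verifies that α_{J,n} : Sym_n(J) → J^n is an isomorphism for each 2 ≤ n ≤ p. If α_{I,p} is an isomorphism, then for every 1 ≤ n ≤ p−1 one has ((Σ_{1 ≤ i < j ≤ s-1} x_i x_j I_s^{n-1}) : x_s) ∩ I^n = Σ_{i=1}^{s-1} x_i·((I_{i,s} I_s^{n-1} : x_s) ∩ I^{n-1}). -/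
open scoped TensorProduct
open PiTensorProduct

/-!
Injectivity of `Symₙ(I) → Iⁿ` for `I = (xᵢ)` means that every form of degree `n` vanishing at `x` is
generated by the linear forms vanishing at `x`. Write `I = J + (y)`, with a variable `Y` for the
generator `y`.

The quotient `F ↦ F₁` of the division `F = F₀ + Y F₁` is a twisted derivation. Applied to a product
`L G`, where `L` is a linear form vanishing at the generators, it gives `c G₀ + L G₁` with `c` the
coefficient of `Y` in `L`. So if `Y F` is generated by linear relations, then up to linear relations
`F` is a form that is free of `Y`, a relation between the generators of `J` alone. This carries the
linear generation of relations from degree `n + 1` down to degree `n`.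

An equation `a y = ∑_{i<j} xᵢ xⱼ (⋯)` with `a = A(x, y)` is a relation `Y A - B`, in which no pure
power `Xᵢᵏ` occurs. Dividing its expression through linear relations by `Y` gives `a = ∑ xᵢ bᵢ`, and
the vanishing of the coefficient of the pure power of `Xᵢ` is what puts `bᵢ y` into
`(xⱼ : j ≠ i) Jⁿ`.
-/

section LinearType

open MvPolynomial

variable {R : Type*} [CommRing R]

section Homogeneous

variable {σ : Type*} {n : ℕ}

theorem homogeneousSubmodule_eq_span_prod_X (n : ℕ) :
    homogeneousSubmodule σ R n = Submodule.span R {F | ∃ f : Fin n → σ, F = ∏ k, X (f k)} := by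
  rw [← homogeneousSubmodule_one_pow, homogeneousSubmodule_one_eq_span_X, Submodule.span_pow]
  congr 1
  ext F
  simp only [Set.mem_pow_iff_prod, Set.mem_range, Set.mem_ofPred_eq]
  constructor
  · rintro ⟨g, hg, rfl⟩
    choose f hf using hg
    exact ⟨f, by simp only [hf]⟩
  · rintro ⟨f, rfl⟩
    exact ⟨fun k => X (f k), fun k => ⟨f k, rfl⟩, rfl⟩

theorem homogeneousSubmodule_succ_le {P : Submodule R (MvPolynomial σ R)}
    (hP : ∀ i m, m.IsHomogeneous n → X i * m ∈ P) : homogeneousSubmodule σ R (n + 1) ≤ P := by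
  rw [← homogeneousSubmodule_one_pow, pow_succ', homogeneousSubmodule_one_pow, Submodule.mul_le]
  intro L hL m hm
  rw [homogeneousSubmodule_one_eq_span_X] at hL
  have hspan : Submodule.span R (Set.range X) ≤ P.comap (LinearMap.mulRight R m) := by
    rw [Submodule.span_le]
    rintro _ ⟨i, rfl⟩
    exact hP i m hm
  exact hspan hL

theorem coeff_single_X_mul_of_ne {i j : σ} (hji : j ≠ i) (n : ℕ) (m : MvPolynomial σ R) :
    coeff (Finsupp.single i n) (X j * m) = 0 := by
  classical
  rw [coeff_X_mul', if_neg (by simp [hji.symm])]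

theorem coeff_single_succ_X_mul (i : σ) (n : ℕ) (m : MvPolynomial σ R) :
    coeff (Finsupp.single i (n + 1)) (X i * m) = coeff (Finsupp.single i n) m := by
  rw [add_comm, Finsupp.single_add, coeff_X_mul]

theorem eval_mem_span_range_pow (x : σ → R) {F : MvPolynomial σ R} (hF : F.IsHomogeneous n) :
    eval x F ∈ Ideal.span (Set.range x) ^ n :=
  (Ideal.mem_span_pow_iff_exists_isHomogeneous x _).2 ⟨F, hF, rfl⟩

theorem eval_sub_coeff_single_mul_pow_mem (x : σ → R) (i : σ) {F : MvPolynomial σ R}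
    (hF : F.IsHomogeneous (n + 1)) :
    eval x F - coeff (Finsupp.single i (n + 1)) F * x i ^ (n + 1) ∈
      Ideal.span (x '' {j | j ≠ i}) * Ideal.span (Set.range x) ^ n := by
  classical
  set K := Ideal.span (x '' {j | j ≠ i}) * Ideal.span (Set.range x) ^ n
  let Λ : MvPolynomial σ R →ₗ[R] R :=
    (aeval x).toLinearMap - x i ^ (n + 1) • lcoeff R (Finsupp.single i (n + 1))
  have hΛ (G : MvPolynomial σ R) :
      Λ G = eval x G - coeff (Finsupp.single i (n + 1)) G * x i ^ (n + 1) := by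
    simp [Λ, aeval_eq_eval, mul_comm]
  suffices hK : homogeneousSubmodule σ R (n + 1) ≤ Submodule.comap Λ K by
    rw [← hΛ]
    exact hK hF
  rw [homogeneousSubmodule_eq_span_prod_X, Submodule.span_le]
  rintro _ ⟨f, rfl⟩
  change Λ _ ∈ K
  rw [hΛ]
  by_cases hf : ∀ k, f k = i
  · simp only [hf, Finset.prod_const, Finset.card_univ, Fintype.card_fin, map_pow, eval_X]
    rw [X_pow_eq_monomial, coeff_monomial, if_pos rfl, one_mul, sub_self]
    exact zero_mem K
  · obtain ⟨k, hk⟩ := not_forall.1 hf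
    have hrest : (∏ l, X (f (k.succAbove l)) : MvPolynomial σ R).IsHomogeneous n := by
      simpa using IsHomogeneous.prod Finset.univ _ (fun _ => 1) fun l _ =>
        isHomogeneous_X R (f (k.succAbove l))
    rw [Fin.prod_univ_succAbove _ k, coeff_single_X_mul_of_ne hk, zero_mul, sub_zero, map_mul,
      eval_X]
    exact Ideal.mul_mem_mul (Ideal.subset_span ⟨_, hk, rfl⟩) (eval_mem_span_range_pow x hrest)

end Homogeneous

section LinearRelations

variable {σ : Type*} {x : σ → R} {n : ℕ}

/-- The linear forms in the variables `X i` that vanish at `x`, that is, the syzygies of the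
family `x`. -/
noncomputable def linearRelations (x : σ → R) : Submodule R (MvPolynomial σ R) :=
  homogeneousSubmodule σ R 1 ⊓ LinearMap.ker (aeval x).toLinearMap

theorem mem_linearRelations {L : MvPolynomial σ R} :
    L ∈ linearRelations x ↔ L.IsHomogeneous 1 ∧ eval x L = 0 := by
  simp [linearRelations, aeval_eq_eval]

/-- In degree `n`, every polynomial relation between the elements `x i` is generated by the linear
ones. The symmetric algebra of the ideal `I = (x i)` is the polynomial ring modulo
`linearRelations x`, so this is the injectivity of `Symₙ(I) → Iⁿ` written in terms of generators. -/
def IsLinearTypeInDegree (x : σ → R) (n : ℕ) : Prop :=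
  ∀ F : MvPolynomial σ R, F.IsHomogeneous n → eval x F = 0 →
    F ∈ Ideal.span (linearRelations x : Set (MvPolynomial σ R))

theorem homogeneousComponent_mul_mem_linearRelations_mul {L : MvPolynomial σ R}
    (hL : L ∈ linearRelations x) (G : MvPolynomial σ R) :
    homogeneousComponent (n + 1) (G * L) ∈ linearRelations x * homogeneousSubmodule σ R n := by
  nth_rw 1 [← sum_homogeneousComponent G, Finset.sum_mul, map_sum]
  refine sum_mem fun k _ => ?_
  have hk : homogeneousComponent k G * L ∈ homogeneousSubmodule σ R (k + 1) :=
    (homogeneousComponent_isHomogeneous k G).mul (mem_linearRelations.1 hL).1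
  rw [homogeneousComponent_of_mem hk]
  split_ifs with hkn
  · obtain rfl : n = k := by omega
    rw [mul_comm (homogeneousComponent n G)]
    exact Submodule.mul_mem_mul hL (homogeneousComponent_mem n G)
  · exact zero_mem _

theorem mem_linearRelations_mul_of_mem_span {F : MvPolynomial σ R} (hF : F.IsHomogeneous (n + 1))
    (hmem : F ∈ Ideal.span (linearRelations x : Set (MvPolynomial σ R))) :
    F ∈ linearRelations x * homogeneousSubmodule σ R n := by
  rw [← homogeneousComponent_eq_self hF]
  clear hF
  induction hmem using Submodule.closure_induction with
  | zero => simp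
  | add F G _ _ hF hG => simpa using add_mem hF hG
  | smul_mem G L hL => exact homogeneousComponent_mul_mem_linearRelations_mul hL G

theorem linearRelations_mul_le_span (M : Submodule R (MvPolynomial σ R)) :
    linearRelations x * M ≤
      (Ideal.span (linearRelations x : Set (MvPolynomial σ R))).restrictScalars R :=
  Submodule.mul_le.2 fun _ hL G _ => Ideal.mul_mem_right G _ (Ideal.subset_span hL)

theorem eval_eq_zero_of_mem_linearRelations_mul {M : Submodule R (MvPolynomial σ R)}
    {F : MvPolynomial σ R} (hF : F ∈ linearRelations x * M) : eval x F = 0 := by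
  have hle : linearRelations x * M ≤ LinearMap.ker (aeval x).toLinearMap :=
    Submodule.mul_le.2 fun L hL G _ => by
      simp [aeval_eq_eval, (mem_linearRelations.1 hL).2]
  simpa [aeval_eq_eval] using hle hF

theorem isLinearTypeInDegree_succ_iff :
    IsLinearTypeInDegree x (n + 1) ↔ ∀ F : MvPolynomial σ R, F.IsHomogeneous (n + 1) →
      eval x F = 0 → F ∈ linearRelations x * homogeneousSubmodule σ R n :=
  forall₃_congr fun _ hF _ =>
    ⟨mem_linearRelations_mul_of_mem_span hF, fun h => linearRelations_mul_le_span _ h⟩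

theorem quotient_mk_eq_of_eval_eq {L L' : MvPolynomial σ R} (hL : L.IsHomogeneous 1)
    (hL' : L'.IsHomogeneous 1) (heval : eval x L = eval x L') :
    Ideal.Quotient.mk (Ideal.span (linearRelations x : Set (MvPolynomial σ R))) L =
      Ideal.Quotient.mk _ L' :=
  Ideal.Quotient.eq.2 <| Ideal.subset_span <|
    mem_linearRelations.2 ⟨hL.sub hL', by rw [map_sub, heval, sub_self]⟩

end LinearRelations

section SymmetricPower

variable {I : Ideal R} {A : Type*} [CommRing A] [Algebra R A]

/-- The degree `n` part of the algebra map `Sym(I) → A` induced by a linear map `φ : I → A`. -/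
noncomputable def symPowLift (φ : I →ₗ[R] A) (n : ℕ) : SymPow R I n →ₗ[R] A :=
  (symRel R I n).liftQ
    (PiTensorProduct.lift ((MultilinearMap.mkPiAlgebra R (Fin n) A).compLinearMap fun _ => φ)) <| by
    rw [symRel, Submodule.span_le]
    rintro _ ⟨v, τ, rfl⟩
    simpa [sub_eq_zero] using (Equiv.prod_comp τ fun k => φ (v k)).symm

theorem symPowLift_mk_tprod (φ : I →ₗ[R] A) {n : ℕ} (v : Fin n → I) :
    symPowLift φ n (Submodule.Quotient.mk (tprod R v)) = ∏ k, φ (v k) := by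
  simp [symPowLift]

theorem alphaCan_mk_tprod {n : ℕ} (v : Fin n → I) :
    alphaCan R I n (Submodule.Quotient.mk (tprod R v)) = ∏ k, (v k : R) := by
  simp [alphaCan, prodML]

theorem exists_linearMap_mk_X {σ : Type*} (x : σ → R) :
    ∃ φ : Ideal.span (Set.range x) →ₗ[R]
        MvPolynomial σ R ⧸ Ideal.span (linearRelations x : Set (MvPolynomial σ R)),
      ∀ i, φ ⟨x i, Ideal.subset_span ⟨i, rfl⟩⟩ = Ideal.Quotient.mk _ (X i) := by
  have hlift (a : Ideal.span (Set.range x)) :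
      ∃ L : MvPolynomial σ R, L.IsHomogeneous 1 ∧ eval x L = a :=
    (Ideal.mem_span_iff_exists_isHomogeneous x a).1 a.2
  choose lift hlift_hom hlift_eval using hlift
  refine ⟨⟨⟨fun a => Ideal.Quotient.mk _ (lift a), fun a b => ?_⟩, fun r a => ?_⟩, fun i => ?_⟩
  · rw [← map_add]
    exact quotient_mk_eq_of_eval_eq (hlift_hom _) ((hlift_hom a).add (hlift_hom b))
      (by simp [hlift_eval])
  · change _ = Ideal.Quotient.mk _ (r • lift a)
    refine quotient_mk_eq_of_eval_eq (hlift_hom _) ?_ (by simp [hlift_eval, smul_eval])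
    exact (homogeneousSubmodule σ R 1).smul_mem r (hlift_hom a)
  · exact quotient_mk_eq_of_eval_eq (hlift_hom _) (isHomogeneous_X R i) (by simp [hlift_eval])

theorem isLinearTypeInDegree_of_injective_alphaCan {σ : Type*} (x : σ → R) {n : ℕ}
    (hinj : Function.Injective (alphaCan R (Ideal.span (Set.range x)) n)) :
    IsLinearTypeInDegree x n := by
  intro F hF hF0
  obtain ⟨φ, hφ⟩ := exists_linearMap_mk_X x
  have hlift : homogeneousSubmodule σ R n ≤
      (LinearMap.range ((symPowLift φ n).prod (alphaCan R _ n))).comap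
        ((Ideal.Quotient.mkₐ R _).toLinearMap.prod (aeval x).toLinearMap) := by
    rw [homogeneousSubmodule_eq_span_prod_X, Submodule.span_le]
    rintro _ ⟨f, rfl⟩
    refine ⟨Submodule.Quotient.mk (tprod R fun k => ⟨x (f k), Ideal.subset_span ⟨f k, rfl⟩⟩), ?_⟩
    simp [symPowLift_mk_tprod, alphaCan_mk_tprod, hφ]
  obtain ⟨t, ht⟩ := hlift hF
  obtain ⟨hmk, heval⟩ := Prod.ext_iff.1 ht
  have ht0 : t = 0 := hinj (by simpa [aeval_eq_eval, hF0] using heval)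
  exact Ideal.Quotient.eq_zero_iff_mem.1 (by simpa [ht0] using hmk.symm)

end SymmetricPower

section DivX

variable {σ : Type*} {n : ℕ}

/-- The quotient in the division of a polynomial by the variable `X i`. -/
noncomputable def divX (i : σ) : MvPolynomial σ R →ₗ[R] MvPolynomial σ R where
  toFun F := F.divMonomial (Finsupp.single i 1)
  map_add' F G := add_divMonomial F G _
  map_smul' r F := by ext; simp [coeff_divMonomial]

theorem divX_X_mul (i : σ) (F : MvPolynomial σ R) : divX i (X i * F) = F :=
  X_mul_divMonomial i F

theorem divX_isHomogeneous (i : σ) {F : MvPolynomial σ R} (hF : F.IsHomogeneous (n + 1)) :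
    (divX i F).IsHomogeneous n := by
  intro d hd
  have hdeg := hF (d := Finsupp.single i 1 + d) (by simpa [divX, coeff_divMonomial] using hd)
  rw [map_add, Finsupp.weight_single, Pi.one_apply, smul_eq_mul, mul_one] at hdeg
  omega

variable [DecidableEq σ]

/-- The substitution `X i ↦ 0`, with values in the same polynomial ring: it is the remainder in the
division by `X i`, and unlike `MvPolynomial.modMonomial` it is an algebra map. -/
noncomputable def setXZero (i : σ) : MvPolynomial σ R →ₐ[R] MvPolynomial σ R :=
  aeval (Function.update X i 0)

theorem setXZero_X_self (i : σ) : setXZero i (X i : MvPolynomial σ R) = 0 := by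
  simp [setXZero]

theorem setXZero_eq_self {i : σ} {F : MvPolynomial σ R} (hi : i ∉ F.vars) : setXZero i F = F :=
  hom_congr_vars (f₁ := (setXZero i).toRingHom) (f₂ := RingHom.id _) (by ext; simp)
    (fun j hj _ => by
      have hji : j ≠ i := fun h => hi (h ▸ hj)
      simp [setXZero, hji]) rfl

theorem eval_setXZero (x : σ → R) (i : σ) (F : MvPolynomial σ R) :
    eval x (setXZero i F) = eval (Function.update x i 0) F := by
  suffices h : (aeval x).comp (setXZero i) = aeval (R := R) (Function.update x i 0) by
    simpa [aeval_eq_eval] using DFunLike.congr_fun h F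
  ext j
  rcases eq_or_ne j i with rfl | hji <;> simp [setXZero, *]

theorem setXZero_isHomogeneous (i : σ) {F : MvPolynomial σ R} (hF : F.IsHomogeneous n) :
    (setXZero i F).IsHomogeneous n := by
  rw [← one_mul n]
  refine hF.aeval _ fun j => ?_
  rcases eq_or_ne j i with rfl | hji
  · simpa using isHomogeneous_zero σ R 1
  · simpa [hji] using isHomogeneous_X R j

theorem setXZero_eq_modMonomial (i : σ) (F : MvPolynomial σ R) :
    setXZero i F = F.modMonomial (Finsupp.single i 1) := by
  have hvars : i ∉ (F.modMonomial (Finsupp.single i 1)).vars := by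
    simp only [mem_vars_iff_mem_support, not_exists, not_and, mem_support_iff]
    intro d hd hdi
    exact hd (coeff_modMonomial_of_le F (by simpa [Nat.one_le_iff_ne_zero] using hdi))
  conv_lhs => rw [← modMonomial_add_divMonomial_single F i]
  rw [map_add, map_mul, setXZero_X_self, zero_mul, add_zero, setXZero_eq_self hvars]

theorem setXZero_add_X_mul_divX (i : σ) (F : MvPolynomial σ R) :
    setXZero i F + X i * divX i F = F := by
  rw [setXZero_eq_modMonomial]
  exact modMonomial_add_divMonomial_single F i

theorem divX_mul (i : σ) (F G : MvPolynomial σ R) :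
    divX i (F * G) = divX i F * setXZero i G + F * divX i G := by
  refine (isRegular_X (n := i)).left ?_
  have hFG := setXZero_add_X_mul_divX i (F * G)
  rw [map_mul] at hFG
  change X i * _ = X i * _
  linear_combination hFG - setXZero i G * setXZero_add_X_mul_divX i F -
    F * setXZero_add_X_mul_divX i G

theorem eval_divX_mul_eval_X (x : σ → R) (i : σ) (F : MvPolynomial σ R) :
    eval x (divX i F) * x i = eval x F - eval (Function.update x i 0) F := by
  have h := congrArg (eval x) (setXZero_add_X_mul_divX i F)
  rw [map_add, map_mul, eval_X, eval_setXZero] at h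
  linear_combination h

end DivX

theorem divX_eq_zero_of_notMem_vars {σ : Type*} {i : σ} {F : MvPolynomial σ R} (hi : i ∉ F.vars) :
    divX i F = 0 := by
  classical
  have h := setXZero_add_X_mul_divX i F
  rw [setXZero_eq_self hi, add_eq_left] at h
  exact (isRegular_X (n := i)).left.mul_left_eq_zero_iff.1 h

section Descent

variable {σ : Type*} [DecidableEq σ] {x : σ → R} {n : ℕ}

theorem map_setXZero_linearRelations_mul_le (i : σ) :
    (linearRelations (Function.update x i 0) * homogeneousSubmodule σ R n).map
        (setXZero i).toLinearMap ≤ linearRelations x * homogeneousSubmodule σ R n := by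
  rw [Submodule.map_mul]
  refine mul_le_mul' ?_ ?_
  · rintro _ ⟨L, hL, rfl⟩
    rw [SetLike.mem_coe, mem_linearRelations] at hL
    exact mem_linearRelations.2 ⟨setXZero_isHomogeneous i hL.1, (eval_setXZero x i L).trans hL.2⟩
  · rintro _ ⟨G, hG, rfl⟩
    exact setXZero_isHomogeneous i hG

theorem map_divX_linearRelations_mul_le (i : σ) :
    (linearRelations x * homogeneousSubmodule σ R (n + 1)).map (divX i) ≤
      (homogeneousSubmodule σ R (n + 1)).map (setXZero i).toLinearMap ⊔
        linearRelations x * homogeneousSubmodule σ R n := by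
  rw [Submodule.map_le_iff_le_comap, Submodule.mul_le]
  intro L hL G hG
  have hdivL : (divX i L).IsHomogeneous 0 :=
    divX_isHomogeneous i (mem_linearRelations.1 hL).1
  obtain ⟨c, hc⟩ : ∃ c, divX i L = C c :=
    ⟨_, totalDegree_eq_zero_iff_eq_C.1 (Nat.le_zero.1 hdivL.totalDegree_le)⟩
  rw [Submodule.mem_comap, divX_mul, hc]
  refine add_mem (Submodule.mem_sup_left ⟨C c * G, IsHomogeneous.C_mul hG c, ?_⟩)
    (Submodule.mem_sup_right (Submodule.mul_mem_mul hL (divX_isHomogeneous i hG)))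
  simp

theorem IsLinearTypeInDegree.of_succ (i : σ) (h : IsLinearTypeInDegree x (n + 2))
    (h₀ : IsLinearTypeInDegree (Function.update x i 0) (n + 1)) :
    IsLinearTypeInDegree x (n + 1) := by
  rw [isLinearTypeInDegree_succ_iff] at h h₀ ⊢
  intro F hF hF0
  have hXF : X i * F ∈ linearRelations x * homogeneousSubmodule σ R (n + 1) := by
    refine h _ ?_ (by rw [map_mul, hF0, mul_zero])
    rw [add_comm (n + 1)]
    exact (isHomogeneous_X R i).mul hF
  obtain ⟨_, ⟨f, hf, rfl⟩, E, hE, rfl⟩ : ∃ G ∈ _, ∃ E ∈ _, G + E = F :=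
    Submodule.mem_sup.1 (map_divX_linearRelations_mul_le i ⟨_, hXF, divX_X_mul i F⟩)
  have hE0 : eval x E = 0 := eval_eq_zero_of_mem_linearRelations_mul hE
  have hf0 : eval (Function.update x i 0) f = 0 := by
    rw [← eval_setXZero]
    simpa [hE0] using hF0
  exact add_mem (map_setXZero_linearRelations_mul_le i ⟨f, h₀ f hf hf0, rfl⟩) hE

end Descent

section Obstruction

variable {ι : Type*} {x : ι → R} {y : R} {n : ℕ}

theorem span_range_elim' (x : ι → R) (y : R) :
    Ideal.span (Set.range (Option.elim' y x)) = Ideal.span (Set.range x) ⊔ Ideal.span {y} := by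
  have hrange : Set.range (Option.elim' y x) = insert y (Set.range x) := by
    ext a
    simp [Option.exists, eq_comm]
  rw [hrange, Set.insert_eq, Ideal.span_union, sup_comm]

theorem span_range_elim'_zero (x : ι → R) :
    Ideal.span (Set.range (Option.elim' 0 x)) = Ideal.span (Set.range x) := by
  rw [span_range_elim', Ideal.span_singleton_zero, sup_bot_eq]

theorem span_image_elim'_zero (x : ι → R) (i : ι) :
    Ideal.span (Option.elim' 0 x '' {j | j ≠ some i}) = Ideal.span (x '' {j | j ≠ i}) := by
  have himage : Option.elim' 0 x '' {j | j ≠ some i} = insert 0 (x '' {j | j ≠ i}) := by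
    ext a
    simp [Option.exists, eq_comm]
  rw [himage]
  exact Submodule.span_insert_zero

theorem update_elim'_none {β : Type*} [DecidableEq (Option ι)] (f : ι → β) (a b : β) :
    Function.update (Option.elim' a f) none b = Option.elim' b f := by
  funext o
  cases o <;> simp

/-- The pairs `(a, c)` for which `a = ∑ xᵢ bᵢ` with `bᵢ ∈ Jⁿ` and
`bᵢ y + cᵢ xᵢⁿ⁺¹ ∈ (xⱼ : j ≠ i) Jⁿ`, where `J = (xᵢ)`. For `c = 0` these `a` form the sum of the
ideals `xᵢ (((xⱼ : j ≠ i) Jⁿ : y) ∩ Jⁿ)`; the component `c` keeps track of the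
coefficients of the pure powers `Xᵢⁿ⁺²` of a relation. -/
def obstructionPairs (x : ι → R) (y : R) (n : ℕ) : Submodule R (R × (ι → R)) where
  carrier := {w | ∃ b : ι →₀ R, (∀ i, b i ∈ Ideal.span (Set.range x) ^ n) ∧
    (∀ i, b i * y + w.2 i * x i ^ (n + 1) ∈
      Ideal.span (x '' {j | j ≠ i}) * Ideal.span (Set.range x) ^ n) ∧
    w.1 = Finsupp.linearCombination R x b}
  zero_mem' := ⟨0, by simp⟩
  add_mem' := by
    rintro w w' ⟨b, hb, hby, hbx⟩ ⟨b', hb', hby', hbx'⟩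
    refine ⟨b + b', fun i => add_mem (hb i) (hb' i), fun i => ?_, by simp [hbx, hbx']⟩
    convert add_mem (hby i) (hby' i) using 1
    simp only [Finsupp.add_apply, Prod.snd_add, Pi.add_apply]
    ring
  smul_mem' := by
    rintro r w ⟨b, hb, hby, hbx⟩
    refine ⟨r • b, fun i => Ideal.mul_mem_left _ r (hb i), fun i => ?_, by simp [hbx]⟩
    convert Ideal.mul_mem_left _ r (hby i) using 1
    simp only [Finsupp.smul_apply, Prod.smul_snd, Pi.smul_apply, smul_eq_mul]
    ring

theorem single_mem_obstructionPairs [DecidableEq ι] {i : ι} {b c : R}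
    (hb : b ∈ Ideal.span (Set.range x) ^ n)
    (hby : b * y + c * x i ^ (n + 1) ∈
      Ideal.span (x '' {j | j ≠ i}) * Ideal.span (Set.range x) ^ n) :
    (b * x i, Pi.single i c) ∈ obstructionPairs x y n := by
  refine ⟨Finsupp.single i b, fun j => ?_, fun j => ?_, by simp⟩ <;>
    rcases eq_or_ne j i with rfl | hji <;> simp [*]

theorem mem_iSup_of_mem_obstructionPairs {a : R} (ha : (a, 0) ∈ obstructionPairs x y n) :
    a ∈ ⨆ i, Ideal.span {x i} *
      ((Ideal.span (x '' {j | j ≠ i}) * Ideal.span (Set.range x) ^ n).colon (Ideal.span {y}) ⊓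
        Ideal.span (Set.range x) ^ n) := by
  obtain ⟨b, hb, hby, rfl⟩ := ha
  refine Submodule.sum_mem _ fun i _ => Submodule.mem_iSup_of_mem i ?_
  change b i * x i ∈ _
  rw [mul_comm (b i)]
  refine Ideal.mul_mem_mul (Ideal.mem_span_singleton_self _)
    ⟨Ideal.mem_colon_span_singleton.2 ?_, hb i⟩
  simpa using hby i

/-- A polynomial `F = F₀ + Y F₁`, with `Y` the variable of index `none` and `F₀` free of `Y`, is
sent to the value of `F₁` together with the coefficients of the powers `Xᵢᵏ`. -/
noncomputable def quotientAndPureCoeffs (x : ι → R) (y : R) (k : ℕ) :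
    MvPolynomial (Option ι) R →ₗ[R] R × (ι → R) :=
  ((aeval (Option.elim' y x)).toLinearMap ∘ₗ divX none).prod
    (LinearMap.pi fun i => lcoeff R (Finsupp.single (some i) k))

theorem quotientAndPureCoeffs_apply (k : ℕ) (F : MvPolynomial (Option ι) R) :
    quotientAndPureCoeffs x y k F =
      (eval (Option.elim' y x) (divX none F), fun i => coeff (Finsupp.single (some i) k) F) := by
  rfl

theorem eval_divX_linearRelation_mul {L : MvPolynomial (Option ι) R}
    (hL : L ∈ linearRelations (Option.elim' y x)) (G : MvPolynomial (Option ι) R) :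
    eval (Option.elim' y x) (divX none (L * G)) =
      eval (Option.elim' y x) (divX none L) * eval (Option.elim' 0 x) G := by
  classical
  rw [divX_mul, map_add, map_mul, map_mul, (mem_linearRelations.1 hL).2, zero_mul, add_zero,
    eval_setXZero, update_elim'_none]

theorem eval_divX_linearRelation_mul_add_mem {L m : MvPolynomial (Option ι) R}
    (hL : L ∈ linearRelations (Option.elim' y x)) (hm : m.IsHomogeneous n) (i : ι) :
    eval (Option.elim' y x) (divX none (L * m)) * y +
        coeff (Finsupp.single (some i) (n + 1)) (L * m) * x i ^ (n + 1) ∈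
      Ideal.span (x '' {j | j ≠ i}) * Ideal.span (Set.range x) ^ n := by
  classical
  obtain ⟨hLhom, hL0⟩ := mem_linearRelations.1 hL
  have hdiv : eval (Option.elim' y x) (divX none (L * m)) * y =
      -eval (Option.elim' 0 x) (L * m) := by
    have h := eval_divX_mul_eval_X (Option.elim' y x) none (L * m)
    rwa [update_elim'_none, map_mul (eval _) L, hL0, zero_mul, zero_sub] at h
  have hLm : (L * m).IsHomogeneous (n + 1) := by
    rw [add_comm]
    exact hLhom.mul hm
  have hmem := neg_mem (eval_sub_coeff_single_mul_pow_mem (Option.elim' 0 x) (some i) hLm)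
  rw [span_image_elim'_zero, span_range_elim'_zero, neg_sub', sub_neg_eq_add, ← hdiv] at hmem
  exact hmem

theorem linearRelations_mul_le_comap_obstructionPairs :
    linearRelations (Option.elim' y x) * homogeneousSubmodule (Option ι) R (n + 1) ≤
      (obstructionPairs x y n).comap (quotientAndPureCoeffs x y (n + 2)) := by
  classical
  rw [Submodule.mul_le]
  intro L hL G hG
  suffices hle : homogeneousSubmodule (Option ι) R (n + 1) ≤
      ((obstructionPairs x y n).comap (quotientAndPureCoeffs x y (n + 2))).comap
        (LinearMap.mulLeft R L) from hle hG
  refine homogeneousSubmodule_succ_le fun j m hm => ?_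
  have hm_mem : eval (Option.elim' 0 x) m ∈ Ideal.span (Set.range x) ^ n :=
    span_range_elim'_zero x ▸ eval_mem_span_range_pow _ hm
  rw [Submodule.mem_comap, Submodule.mem_comap, LinearMap.mulLeft_apply,
    quotientAndPureCoeffs_apply, eval_divX_linearRelation_mul hL, map_mul, eval_X,
    mul_left_comm L]
  cases j with
  | none =>
    convert zero_mem (obstructionPairs x y n) with k
    · simp
    · exact coeff_single_X_mul_of_ne (by simp) _ _
  | some i =>
    have hcoeff : (fun k => coeff (Finsupp.single (some k) (n + 2)) (X (some i) * (L * m))) =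
        Pi.single i (coeff (Finsupp.single (some i) (n + 1)) (L * m)) := by
      funext k
      rcases eq_or_ne k i with rfl | hki
      · rw [Pi.single_eq_same, coeff_single_succ_X_mul]
      · rw [Pi.single_eq_of_ne hki, coeff_single_X_mul_of_ne (by simpa using hki.symm)]
    have hvalue : eval (Option.elim' y x) (divX none L) * (x i * eval (Option.elim' 0 x) m) =
        eval (Option.elim' y x) (divX none (L * m)) * x i := by
      rw [eval_divX_linearRelation_mul hL]
      ring
    rw [hcoeff, Option.elim'_some, hvalue]
    refine single_mem_obstructionPairs ?_ (eval_divX_linearRelation_mul_add_mem hL hm i)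
    rw [eval_divX_linearRelation_mul hL]
    exact Ideal.mul_mem_left _ _ hm_mem

end Obstruction

section Colon

variable {ι : Type*} {x : ι → R} {y : R} {n : ℕ}

theorem iSup_span_mul_le_map_aeval [LinearOrder ι] (x : ι → R) (n : ℕ) :
    (⨆ (i) (j) (_ : i < j), Ideal.span {x i * x j} * Ideal.span (Set.range x) ^ n) ≤
      (homogeneousSubmodule ι R (n + 2) ⊓
        ⨅ k, LinearMap.ker (lcoeff R (Finsupp.single k (n + 2)))).map (aeval x).toLinearMap := by
  refine iSup_le fun i => iSup_le fun j => iSup_le fun hij a ha => ?_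
  obtain ⟨b, hb, rfl⟩ := Ideal.mem_span_singleton_mul.1 ha
  obtain ⟨m, hm, rfl⟩ := (Ideal.mem_span_pow_iff_exists_isHomogeneous x b).1 hb
  refine ⟨X i * (X j * m), ⟨?_, Submodule.mem_iInf _ |>.2 fun k => ?_⟩, ?_⟩
  · rw [add_comm, ← one_add_one_eq_two, add_assoc]
    exact (isHomogeneous_X R i).mul ((isHomogeneous_X R j).mul hm)
  · rw [LinearMap.mem_ker, lcoeff_apply]
    by_cases hik : i = k
    · rw [mul_left_comm]
      exact coeff_single_X_mul_of_ne (hik ▸ hij.ne') _ _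
    · exact coeff_single_X_mul_of_ne hik _ _
  · simp [aeval_eq_eval, mul_assoc]

theorem mem_obstructionPairs_of_mul_eq_eval (h : IsLinearTypeInDegree (Option.elim' y x) (n + 2))
    {a : R} (ha : a ∈ (Ideal.span (Set.range x) ⊔ Ideal.span {y}) ^ (n + 1))
    {B : MvPolynomial ι R} (hB : B.IsHomogeneous (n + 2)) (haB : a * y = eval x B) :
    (a, fun i => -coeff (Finsupp.single i (n + 2)) B) ∈ obstructionPairs x y n := by
  classical
  rw [← span_range_elim'] at ha
  obtain ⟨A, hA, rfl⟩ := (Ideal.mem_span_pow_iff_exists_isHomogeneous _ a).1 ha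
  have hrename : eval (Option.elim' y x) (rename some B) = eval x B := by
    rw [eval_rename]
    rfl
  have hrelation : X none * A - rename some B ∈
      linearRelations (Option.elim' y x) * homogeneousSubmodule (Option ι) R (n + 1) := by
    refine isLinearTypeInDegree_succ_iff.1 h _ (.sub ?_ hB.rename_isHomogeneous) ?_
    · rw [add_comm (n + 1)]
      exact (isHomogeneous_X R none).mul hA
    · rw [map_sub, map_mul, eval_X, hrename, ← haB, Option.elim'_none, mul_comm, sub_self]
  have hdiv : divX none (X none * A - rename some B) = A := by
    have hvars : none ∉ (rename some B).vars := fun hmem => by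
      simpa using vars_rename some B hmem
    rw [map_sub, divX_X_mul, divX_eq_zero_of_notMem_vars hvars, sub_zero]
  have hcoeff (i : ι) : coeff (Finsupp.single (some i) (n + 2)) (X none * A - rename some B) =
      -coeff (Finsupp.single i (n + 2)) B := by
    rw [coeff_sub, coeff_single_X_mul_of_ne (by simp), zero_sub, ← Finsupp.mapDomain_single,
      coeff_rename_mapDomain _ (Option.some_injective ι)]
  have hmem := linearRelations_mul_le_comap_obstructionPairs hrelation
  simpa only [Submodule.mem_comap, quotientAndPureCoeffs_apply, hdiv, hcoeff] using hmem

theorem colon_inf_pow_le_iSup [LinearOrder ι]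
    (h : IsLinearTypeInDegree (Option.elim' y x) (n + 2)) :
    (⨆ (i) (j) (_ : i < j), Ideal.span {x i * x j} * Ideal.span (Set.range x) ^ n).colon
        (Ideal.span {y}) ⊓ (Ideal.span (Set.range x) ⊔ Ideal.span {y}) ^ (n + 1) ≤
      ⨆ i, Ideal.span {x i} *
        ((Ideal.span (x '' {j | j ≠ i}) * Ideal.span (Set.range x) ^ n).colon (Ideal.span {y}) ⊓
          Ideal.span (Set.range x) ^ n) := by
  rintro a ⟨hay, ha⟩
  obtain ⟨B, ⟨hB, hBcoeff⟩, haB⟩ :=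
    iSup_span_mul_le_map_aeval x n (Ideal.mem_colon_span_singleton.1 hay)
  have hmem := mem_obstructionPairs_of_mul_eq_eval h ha hB haB.symm
  have hpure (i : ι) : coeff (Finsupp.single i (n + 2)) B = 0 :=
    (Submodule.mem_iInf _).1 hBcoeff i
  simp only [hpure, neg_zero] at hmem
  exact mem_iSup_of_mem_obstructionPairs hmem

theorem span_singleton_mul_le_iSup [LinearOrder ι] (x : ι → R) (K : Ideal R) (i : ι) :
    Ideal.span {x i} * (Ideal.span (x '' {j | j ≠ i}) * K) ≤
      ⨆ (i) (j) (_ : i < j), Ideal.span {x i * x j} * K := by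
  have hpair {i j : ι} (hij : i < j) : Ideal.span {x i * x j} * K ≤
      ⨆ (i) (j) (_ : i < j), Ideal.span {x i * x j} * K :=
    le_iSup_of_le i <| le_iSup_of_le j <| le_iSup_of_le hij le_rfl
  have hspan : Ideal.span (x '' {j | j ≠ i}) = ⨆ j, ⨆ _ : j ≠ i, Ideal.span {x j} := by
    simp only [Ideal.span, Submodule.span_eq_iSup_of_singleton_spans (_ '' _), iSup_image,
      Set.mem_ofPred_eq]
  simp only [hspan, Ideal.iSup_mul, Ideal.mul_iSup, ← mul_assoc,
    Ideal.span_singleton_mul_span_singleton]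
  refine iSup_le fun j => iSup_le fun hji => ?_
  rcases hji.lt_or_gt with hlt | hgt
  · rw [mul_comm (x i)]
    exact hpair hlt
  · exact hpair hgt

theorem iSup_le_colon_inf_pow [LinearOrder ι] {I : Ideal R} (hxI : ∀ i, x i ∈ I) (K : Ideal R)
    (y : R) (n : ℕ) :
    (⨆ i, Ideal.span {x i} *
        ((Ideal.span (x '' {j | j ≠ i}) * K).colon (Ideal.span {y}) ⊓ I ^ n)) ≤
      (⨆ (i) (j) (_ : i < j), Ideal.span {x i * x j} * K).colon (Ideal.span {y}) ⊓
        I ^ (n + 1) := by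
  refine iSup_le fun i => Ideal.span_singleton_mul_le_iff.2 fun b ⟨hby, hb⟩ => ⟨?_, ?_⟩
  · rw [SetLike.mem_coe, Ideal.mem_colon_span_singleton] at hby ⊢
    rw [mul_assoc]
    exact span_singleton_mul_le_iSup x K i
      (Ideal.mul_mem_mul (Ideal.mem_span_singleton_self _) hby)
  · rw [pow_succ']
    exact Ideal.mul_mem_mul (hxI i) hb

end Colon

theorem span_range_eq_castSucc_sup_last {s : ℕ} (x : Fin (s + 1) → R) :
    Ideal.span (Set.range x) =
      Ideal.span (Set.range fun i : Fin s => x i.castSucc) ⊔ Ideal.span {x (Fin.last s)} := by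
  have hrange : Set.range x = insert (x (Fin.last s)) (Set.range (Fin.init x)) := by
    rw [← Fin.range_snoc, Fin.snoc_init_self]
  rw [hrange, Set.insert_eq, Ideal.span_union, sup_comm]
  rfl

end LinearType

theorem statement16_general {R ι : Type*} [CommRing R] [LinearOrder ι] (x : ι → R) (y : R)
    {I J : Ideal R} (hJ : J = Ideal.span (Set.range x)) (hI : I = J ⊔ Ideal.span {y}) {n p : ℕ}
    (hnp : n + 2 ≤ p)
    (hJiso : ∀ k, n + 2 ≤ k → k < p → Function.Injective (alphaCan R J k))
    (hIiso : Function.Injective (alphaCan R I p)) :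
    (⨆ (i) (j) (_ : i < j), Ideal.span {x i * x j} * J ^ n).colon (Ideal.span {y}) ⊓ I ^ (n + 1) =
      ⨆ i, Ideal.span {x i} *
        ((Ideal.span (x '' {j | j ≠ i}) * J ^ n).colon (Ideal.span {y}) ⊓ I ^ n) := by
  have hJI : J ≤ I := hI ▸ le_sup_left
  have hlinear : IsLinearTypeInDegree (Option.elim' y x) (n + 2) := by
    refine Nat.decreasingInduction' (fun k hkp hnk hk => ?_) hnp
      (isLinearTypeInDegree_of_injective_alphaCan _ ?_)
    · obtain ⟨k, rfl⟩ : ∃ l, k = l + 1 := ⟨k - 1, by omega⟩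
      refine hk.of_succ none (isLinearTypeInDegree_of_injective_alphaCan _ ?_)
      rw [update_elim'_none, span_range_elim'_zero, ← hJ]
      exact hJiso _ hnk hkp
    · rwa [span_range_elim', ← hJ, ← hI]
  refine le_antisymm ?_ (iSup_le_colon_inf_pow (fun i => hJI ?_) _ y n)
  · subst hJ hI
    refine (colon_inf_pow_le_iSup hlinear).trans (iSup_mono fun i => ?_)
    gcongr
  · exact hJ ▸ Ideal.subset_span ⟨i, rfl⟩

/-- Vanishing of the second obstruction.  Let `I = (x₁,…,x_{s+1})` with `s + 1 ≥ 3`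
generators (the last one playing the role of `x_s` in the paper), and suppose
`J = (x₁,…,x_s)` satisfies that `α_{J,n}` is an isomorphism for `2 ≤ n ≤ p`.
If `α_{I,p}` is an isomorphism, then for every `1 ≤ n ≤ p − 1`,
`((∑_{i<j} xᵢxⱼ J^{n-1}) : x_{s+1}) ∩ Iⁿ = ∑ᵢ xᵢ((I_{i,s+1} Jⁿ⁻¹ : x_{s+1}) ∩ Iⁿ⁻¹)`. -/
theorem statement16 {R : Type*} [CommRing R] {s : ℕ} (hs : 2 ≤ s)
    (x : Fin (s + 1) → R)
    (I J : Ideal R)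
    (hI : I = Ideal.span (Set.range x))
    (hJ : J = Ideal.span (Set.range fun i : Fin s => x i.castSucc))
    (p : ℕ) (hp : 2 ≤ p)
    (hJiso : ∀ n, 2 ≤ n → n ≤ p → Function.Injective (alphaCan R J n))
    (hIiso : Function.Injective (alphaCan R I p)) :
    ∀ n, 1 ≤ n → n ≤ p - 1 →
      ((⨆ (i : Fin s) (j : Fin s) (_ : i < j),
          Ideal.span {x i.castSucc * x j.castSucc} * J ^ (n - 1)).colon
            (Ideal.span {x (Fin.last s)})) ⊓ I ^ n
        = ⨆ i : Fin s, Ideal.span {x i.castSucc} *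
            (((Ideal.span ((fun j : Fin s => x j.castSucc) '' {j | j ≠ i}) * J ^ (n - 1)).colon
                (Ideal.span {x (Fin.last s)})) ⊓ I ^ (n - 1)) := by
  intro n hn hnp
  obtain ⟨k, rfl⟩ : ∃ k, n = k + 1 := ⟨n - 1, by omega⟩
  have hIJ : I = J ⊔ Ideal.span {x (Fin.last s)} := by
    rw [hI, hJ, span_range_eq_castSucc_sup_last]
  simpa only [Nat.add_sub_cancel] using
    statement16_general (n := k) (fun i : Fin s => x i.castSucc) (x (Fin.last s)) hJ hIJ (by omega)
      (fun m hm hmp => hJiso m (by omega) hmp.le) hIiso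
end
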